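/- arXiv:2503.03213 — 2 statements merged into one kernel-verified Lean document; each statement's English description precedes it below -/
import Mathlib

section
/- (Key lemma in the proof of Theorem 5.2.) For the dense-to-sparse gating MoE with linear router, any bounded Lipschitz expert function ℰ, any k ≥ k*, and every r ≥ 1: for every ε > 0 there exists a mixing measure G ∈ G_k(Θ) with 0 < L_{3,r}(G, G*) ≤ ε and ‖g_G − g_{G*}‖_{L²(μ)} ≤ ε · L_{3,r}(G, G*); in particular lim_{ε→0} inf{‖g_G − g_{G*}‖_{L²(μ)} / L_{3,r}(G, G*) : G ∈ G_k(Θ), L_{3,r}(G, G*) ≤ ε} = 0. This holds irrespective of the expert structure, due to the interaction between the temperature and the gating parameters. -/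
open scoped BigOperators InnerProductSpace Classical
open MeasureTheory Finset Real

noncomputable section

abbrev Euc (n : ℕ) := EuclideanSpace ℝ (Fin n)

/-- Dense-to-sparse gating MoE regression function with linear router and temperature `τ`. -/
def dsMoe {d q : ℕ} (Ex : Euc d → Euc q → ℝ) {m : ℕ}
    (β : Fin m → ℝ) (ω : Fin m → Euc d) (τ : ℝ) (η : Fin m → Euc q) (x : Euc d) : ℝ :=
  ∑ i, (Real.exp ((⟪ω i, x⟫_ℝ + β i) / τ) / ∑ j, Real.exp ((⟪ω j, x⟫_ℝ + β j) / τ)) *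
    Ex x (η i)

/-- Euclidean distance between atoms `θ = (ω, τ, η)` and `θ' = (ω', τ', η')`. -/
def pDist3 {d q : ℕ} (ω : Euc d) (τ : ℝ) (η : Euc q) (ω' : Euc d) (τ' : ℝ) (η' : Euc q) : ℝ :=
  Real.sqrt (‖ω - ω'‖ ^ 2 + |τ - τ'| ^ 2 + ‖η - η'‖ ^ 2)

/-- Voronoi cell `A_j` generated by the `j`-th ground-truth atom. -/
def cell3 {d q : ℕ} {m K : ℕ} (ω : Fin m → Euc d) (τ : ℝ) (η : Fin m → Euc q)
    (ωs : Fin K → Euc d) (τs : ℝ) (ηs : Fin K → Euc q) (j : Fin K) : Finset (Fin m) :=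
  univ.filter fun i => ∀ ℓ, ℓ ≠ j →
    pDist3 (ω i) τ (η i) (ωs j) τs (ηs j) ≤ pDist3 (ω i) τ (η i) (ωs ℓ) τs (ηs ℓ)

/-- The Voronoi loss `L_{3,r}(G, G*)`. -/
def vorLoss3 {d q : ℕ} {m K : ℕ} (r : ℝ) (β : Fin m → ℝ) (ω : Fin m → Euc d) (τ : ℝ)
    (η : Fin m → Euc q) (βs : Fin K → ℝ) (ωs : Fin K → Euc d) (τs : ℝ)
    (ηs : Fin K → Euc q) : ℝ :=
  (∑ j, |(∑ i ∈ cell3 ω τ η ωs τs ηs j, Real.exp (β i / τ)) - Real.exp (βs j / τs)|)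
  + ∑ j, ∑ i ∈ cell3 ω τ η ωs τs ηs j,
      Real.exp (β i / τ) * (‖ω i - ωs j‖ ^ r + |τ - τs| ^ r + ‖η i - ηs j‖ ^ r)

/-- **Key lemma in the proof of Theorem 5.2.**  For the dense-to-sparse gating MoE with
linear router, any bounded Lipschitz expert `ℰ`, any `k ≥ k*` and every `r ≥ 1`:
for every `ε > 0` there is `G ∈ G_k(Θ)` with `0 < L_{3,r}(G, G*) ≤ ε` and
`‖g_G − g_{G*}‖_{L²(μ)} ≤ ε ⋅ L_{3,r}(G, G*)`; hence the infimum of the ratio near `G*`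
vanishes, irrespective of the expert structure. -/
theorem dense_to_sparse_moe_ratio_vanishes
    (d q k K : ℕ) (hd : 1 ≤ d) (hq : 1 ≤ q)
    (Ex : Euc d → Euc q → ℝ)
    (hbound : ∃ M : ℝ, ∀ x η, |Ex x η| ≤ M)
    (hlip : ∃ L : ℝ, ∀ x η η', |Ex x η - Ex x η'| ≤ L * ‖η - η'‖)
    (Θ : Set (ℝ × Euc d × ℝ × Euc q)) (hΘ : IsCompact Θ)
    (hΘτ : ∀ p ∈ Θ, 0 < p.2.2.1)
    (X : Set (Euc d)) (hX : Bornology.IsBounded X)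
    (μ : Measure (Euc d)) [IsProbabilityMeasure μ] (hμX : μ X = 1)
    (βs : Fin (K + 1) → ℝ) (ωs : Fin (K + 1) → Euc d) (τs : ℝ) (ηs : Fin (K + 1) → Euc q)
    (hτs : 0 < τs)
    (hΘs : ∀ j, (βs j, ωs j, τs, ηs j) ∈ interior Θ)
    (hdistinct : Function.Injective fun j => (ωs j, ηs j))
    (hzero : βs (Fin.last K) = 0 ∧ ωs (Fin.last K) = 0)
    (hnonzero : ∃ j, ωs j ≠ 0)
    (hk : K + 1 ≤ k)
    (r : ℝ) (hr : 1 ≤ r) :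
    ∀ ε : ℝ, 0 < ε →
      ∃ (m : ℕ), 1 ≤ m ∧ m ≤ k ∧
        ∃ (β : Fin m → ℝ) (ω : Fin m → Euc d) (τ : ℝ) (η : Fin m → Euc q),
          (∀ i, (β i, ω i, τ, η i) ∈ Θ) ∧ 0 < τ ∧
          0 < vorLoss3 r β ω τ η βs ωs τs ηs ∧
          vorLoss3 r β ω τ η βs ωs τs ηs ≤ ε ∧
          Real.sqrt (∫ x in X, (dsMoe Ex β ω τ η x - dsMoe Ex βs ωs τs ηs x) ^ 2 ∂μ) ≤
            ε * vorLoss3 r β ω τ η βs ωs τs ηs := by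
  intro ε hε
  have hmem : ∀ᶠ t : ℝ in nhdsWithin 0 (Set.Ioi 0), ∀ i,
      ((1 + t) * βs i, (1 + t) • ωs i, (1 + t) * τs, ηs i) ∈ Θ := by
    rw [Filter.eventually_all]
    intro i
    apply Filter.Eventually.filter_mono nhdsWithin_le_nhds
    have hc : Continuous fun t : ℝ =>
        ((1 + t) * βs i, (1 + t) • ωs i, (1 + t) * τs, ηs i) := by fun_prop
    have h0 := hc.tendsto 0
    simp only [add_zero, one_mul, one_smul] at h0
    exact h0 (mem_interior_iff_mem_nhds.mp (hΘs i))
  have hcell : ∀ᶠ t : ℝ in nhdsWithin 0 (Set.Ioi 0), ∀ i l, l ≠ i →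
      pDist3 ((1 + t) • ωs i) ((1 + t) * τs) (ηs i) (ωs i) τs (ηs i) <
      pDist3 ((1 + t) • ωs i) ((1 + t) * τs) (ηs i) (ωs l) τs (ηs l) := by
    rw [Filter.eventually_all]
    intro i
    rw [Filter.eventually_all]
    intro l
    by_cases hl : l = i
    · simp [hl]
    apply Filter.Eventually.filter_mono nhdsWithin_le_nhds
    have hc : ∀ l, Continuous fun t : ℝ =>
        pDist3 ((1 + t) • ωs i) ((1 + t) * τs) (ηs i) (ωs l) τs (ηs l) := by
      intro l
      unfold pDist3
      fun_prop
    have h := (hc i).continuousAt.eventually_lt (x₀ := (0 : ℝ)) (hc l).continuousAt ?_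
    · filter_upwards [h] with t ht _
      exact ht
    · simp only [add_zero, one_mul, one_smul, pDist3, sub_self, norm_zero, abs_zero]
      apply Real.sqrt_lt_sqrt (by positivity)
      by_cases hw : ωs i = ωs l
      · have he : ηs i ≠ ηs l := fun he => hl (hdistinct (by simp [hw, he]))
        have := norm_pos_iff.mpr (sub_ne_zero.mpr he)
        have h2 : 0 < ‖ηs i - ηs l‖ ^ 2 := by positivity
        nlinarith [sq_nonneg ‖ωs i - ωs l‖]
      · have := norm_pos_iff.mpr (sub_ne_zero.mpr hw)
        have h2 : 0 < ‖ωs i - ωs l‖ ^ 2 := by positivity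
        nlinarith [sq_nonneg ‖ηs i - ηs l‖]
  have hsmall : ∀ᶠ t : ℝ in nhdsWithin 0 (Set.Ioi 0),
      ∑ j, Real.exp (βs j / τs) * (‖(1 + t) • ωs j - ωs j‖ ^ r + |(1 + t) * τs - τs| ^ r
        + ‖ηs j - ηs j‖ ^ r) < ε := by
    apply Filter.Eventually.filter_mono nhdsWithin_le_nhds
    have hr0 : 0 ≤ r := by linarith
    have hc : Continuous fun t : ℝ =>
      ∑ j, Real.exp (βs j / τs) * (‖(1 + t) • ωs j - ωs j‖ ^ r + |(1 + t) * τs - τs| ^ r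
        + ‖ηs j - ηs j‖ ^ r) := by
      refine continuous_finset_sum _ fun j _ => continuous_const.mul ?_
      refine ((Continuous.rpow_const (by fun_prop) fun _ => Or.inr hr0).add
        (Continuous.rpow_const (by fun_prop) fun _ => Or.inr hr0)).add continuous_const
    have h := hc.continuousAt.eventually_lt (x₀ := (0 : ℝ)) (continuousAt_const (y := ε)) ?_
    · exact h
    · have : r ≠ 0 := by linarith
      simpa [Real.zero_rpow this] using hε
  obtain ⟨t, ⟨⟨hm, hcl⟩, hs⟩, ht⟩ :=
    (((hmem.and hcell).and hsmall).and self_mem_nhdsWithin).exists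
  have ht : 0 < t := ht
  have h1 : (1 + t) ≠ 0 := by linarith
  have hce : ∀ j, cell3 (fun i => (1 + t) • ωs i) ((1 + t) * τs) ηs ωs τs ηs j = {j} := by
    intro j
    ext i
    simp only [cell3, Finset.mem_filter, Finset.mem_univ, true_and, Finset.mem_singleton]
    constructor
    · intro h
      by_contra hij
      exact absurd (h i hij) (not_le.mpr (hcl i j (Ne.symm hij)))
    · rintro rfl l hl
      exact (hcl i l hl).le
  have hbe : ∀ j, (1 + t) * βs j / ((1 + t) * τs) = βs j / τs :=
    fun j => mul_div_mul_left _ _ h1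
  have hL : vorLoss3 r (fun i => (1 + t) * βs i) (fun i => (1 + t) • ωs i) ((1 + t) * τs) ηs
      βs ωs τs ηs = ∑ j, Real.exp (βs j / τs) * (‖(1 + t) • ωs j - ωs j‖ ^ r
        + |(1 + t) * τs - τs| ^ r + ‖ηs j - ηs j‖ ^ r) := by
    unfold vorLoss3
    simp only [hce, Finset.sum_singleton, hbe, sub_self, abs_zero, Finset.sum_const_zero, zero_add]
  have hg : ∀ x, dsMoe Ex (fun i => (1 + t) * βs i) (fun i => (1 + t) • ωs i) ((1 + t) * τs) ηs x
      = dsMoe Ex βs ωs τs ηs x := by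
    intro x
    unfold dsMoe
    simp only [real_inner_smul_left, ← mul_add, mul_div_mul_left _ _ h1]
  have hpos : 0 < vorLoss3 r (fun i => (1 + t) * βs i) (fun i => (1 + t) • ωs i)
      ((1 + t) * τs) ηs βs ωs τs ηs := by
    rw [hL]
    apply Finset.sum_pos _ Finset.univ_nonempty
    intro j _
    have h3 : 0 < |(1 + t) * τs - τs| := by
      apply abs_pos.mpr
      have : 0 < t * τs := by positivity
      linarith
    positivity
  refine ⟨K + 1, by omega, hk, _, _, (1 + t) * τs, ηs, hm, by positivity, hpos, ?_, ?_⟩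
  · rw [hL]
    exact hs.le
  · simp only [hg, sub_self]
    simp only [ne_eq, OfNat.ofNat_ne_zero, not_false_eq_true, zero_pow, integral_zero,
      Real.sqrt_zero]
    positivity

end
end

section
/- (Proposition 3.1.) Consider i.i.d. data (X_1, Y_1), …, (X_n, Y_n) with X_i ~ μ and Y_i = f_{G*}(X_i) + ε_i, where ε_i | X_i ~ N(0, ν) for a fixed ν > 0. Let Ĝ_n : (ℝ^d × ℝ)^n → G_k(Θ) be any measurable least squares estimator, i.e., Ĝ_n((x_i, y_i)_{i=1}^n) minimizes Σ_{i=1}^n (y_i − f_G(x_i))² over G ∈ G_k(Θ). Then ‖f_{Ĝ_n} − f_{G*}‖_{L²(μ)} = O_P(√(log n / n)): for every ε > 0 there exists C > 0 such that for all n ≥ 2, P(‖f_{Ĝ_n((X_i, Y_i)_{i=1}^n)} − f_{G*}‖_{L²(μ)} > C · √(log(n)/n)) ≤ ε. -/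
open scoped BigOperators InnerProductSpace Classical
open MeasureTheory Finset Real

noncomputable section

/-- The softmax-gating mixture-of-experts regression function. -/
def moe {d q : ℕ} (Ex : Euc d → Euc q → ℝ) {m : ℕ}
    (β : Fin m → ℝ) (ω : Fin m → Euc d) (η : Fin m → Euc q) (x : Euc d) : ℝ :=
  ∑ i, (Real.exp (⟪ω i, x⟫_ℝ + β i) / ∑ j, Real.exp (⟪ω j, x⟫_ℝ + β j)) * Ex x (η i)

/-- Parameter space of mixing measures with between `1` and `k` atoms: `⟨m, p⟩` encodes
`G = ∑_{i=1}^{m+1} exp(β_i) δ_{(ω_i, η_i)}`. -/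
def ParamSpaceM (d q k : ℕ) : Type :=
  Σ m : Fin k, (Fin ((m : ℕ) + 1) → ℝ × Euc d × Euc q)

instance (d q k : ℕ) : MeasurableSpace (ParamSpaceM d q k) := by
  unfold ParamSpaceM; infer_instance

/-- The regression function determined by an element of the parameter space. -/
def moeOf {d q k : ℕ} (Ex : Euc d → Euc q → ℝ) (p : ParamSpaceM d q k) (x : Euc d) : ℝ :=
  moe Ex (fun i => (p.2 i).1) (fun i => (p.2 i).2.1) (fun i => (p.2 i).2.2) x

/-- Joint law of one data point `(X, Y)` with `X ∼ μ` and `Y | X ∼ N(f(X), v)`. -/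
def jointLaw {d : ℕ} (μ : Measure (Euc d)) (f : Euc d → ℝ) (v : NNReal) :
    Measure (Euc d × ℝ) :=
  μ.bind fun x => (ProbabilityTheory.gaussianReal (f x) v).map (Prod.mk x)

lemma aux_lintegral_pi_prod_le {α : Type*} [MeasurableSpace α] (ρ : Measure α)
    [IsFiniteMeasure ρ] (g : α → ENNReal) (hg : ∀ z, g z ≠ ⊤) (n : ℕ) :
    ∫⁻ z : Fin n → α, ∏ i, g (z i) ∂(Measure.pi fun _ : Fin n => ρ) ≤ (∫⁻ z, g z ∂ρ) ^ n := by
  induction n with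
  | zero => simp
  | succ n ih =>
    have hp := measurePreserving_piFinSuccAbove (fun _ : Fin (n + 1) => ρ) 0
    have h1 : ∫⁻ z : Fin (n + 1) → α, ∏ i, g (z i) ∂(Measure.pi fun _ : Fin (n + 1) => ρ)
        = ∫⁻ w : α × (Fin n → α), g w.1 * ∏ i, g (w.2 i)
          ∂(ρ.prod (Measure.pi fun _ : Fin n => ρ)) := by
      rw [← hp.lintegral_comp_emb (MeasurableEquiv.measurableEmbedding _)]
      refine lintegral_congr fun z => ?_
      rw [Fin.prod_univ_succ]
      simp [MeasurableEquiv.piFinSuccAbove, Fin.tail]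
    rw [h1]
    refine (lintegral_prod_le _).trans ?_
    calc ∫⁻ x, ∫⁻ y : Fin n → α, g x * ∏ i, g (y i) ∂(Measure.pi fun _ : Fin n => ρ) ∂ρ
        ≤ ∫⁻ x, (∫⁻ z, g z ∂ρ) ^ n * g x ∂ρ := by
          refine lintegral_mono fun x => ?_
          simp only
          rw [lintegral_const_mul' _ _ (hg x), mul_comm]
          gcongr
      _ ≤ _ := by
          by_cases h : (∫⁻ z, g z ∂ρ) = ⊤
          · rw [h]; simp
          · rw [lintegral_const_mul' _ _ (ENNReal.pow_ne_top h), pow_succ]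

lemma aux_lintegral_jointLaw_le {d : ℕ} (μ : Measure (Euc d)) (f : Euc d → ℝ) (v : NNReal)
    (g : Euc d × ℝ → ENNReal) :
    ∫⁻ z, g z ∂(jointLaw μ f v) ≤
      ∫⁻ x, ∫⁻ y, g (x, y) ∂(ProbabilityTheory.gaussianReal (f x) v) ∂μ := by
  unfold jointLaw
  exact (Measure.lintegral_bind_le _ _ _).trans (lintegral_mono fun x => lintegral_map_le _ _)

lemma aux_finite_jointLaw {d : ℕ} (μ : Measure (Euc d)) [IsProbabilityMeasure μ]
    (f : Euc d → ℝ) (v : NNReal) : IsFiniteMeasure (jointLaw μ f v) := by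
  constructor
  rw [← lintegral_one]
  refine (aux_lintegral_jointLaw_le μ f v _).trans_lt ?_
  simp

lemma aux_jointLaw_ae {d : ℕ} (μ : Measure (Euc d)) [IsProbabilityMeasure μ]
    (f : Euc d → ℝ) (v : NNReal) (S : Set (Euc d)) (hS : MeasurableSet S) (h : μ Sᶜ = 0) :
    ∀ᵐ z ∂(jointLaw μ f v), z.1 ∈ S := by
  have hm : MeasurableSet (Prod.fst ⁻¹' Sᶜ : Set (Euc d × ℝ)) := measurable_fst hS.compl
  have : (jointLaw μ f v) (Prod.fst ⁻¹' Sᶜ) = 0 := by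
    rw [← lintegral_indicator_one hm, ← nonpos_iff_eq_zero]
    refine (aux_lintegral_jointLaw_le μ f v _).trans ?_
    have : ∀ x y, (Prod.fst ⁻¹' Sᶜ : Set (Euc d × ℝ)).indicator (1 : Euc d × ℝ → ENNReal) (x, y)
      = Sᶜ.indicator 1 x := by
      intro x y; simp [Set.indicator]
    simp only [this, lintegral_const, measure_univ, mul_one]
    rw [lintegral_indicator_one hS.compl, h]
  exact this

lemma aux_cover {F : Type*} [NormedAddCommGroup F] [NormedSpace ℝ F] [FiniteDimensional ℝ F]
    (R : ℝ) (hR : 0 < R) :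
    ∃ A a : ℕ, ∀ n : ℕ, 1 ≤ n → ∃ S : Finset F, S.card ≤ A * n ^ a ∧
      Metric.closedBall (0 : F) R ⊆ ⋃ s ∈ S, Metric.closedBall s (1 / n) := by
  have : ProperSpace F := FiniteDimensional.proper ℝ F
  obtain ⟨T, -, hTf, hT⟩ := (isCompact_closedBall (0 : F) 1).finite_cover_balls
    (e := (1 / 2 : ℝ)) (by norm_num)
  lift T to Finset F using hTf
  have key : ∀ j : ℕ, ∃ S : Finset F, S.card ≤ T.card ^ j ∧
      Metric.closedBall (0 : F) R ⊆ ⋃ s ∈ S, Metric.closedBall s (R * (1 / 2) ^ j) := by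
    intro j
    induction j with
    | zero => exact ⟨{0}, by simp, by simp⟩
    | succ j ih =>
      obtain ⟨S, hS, hc⟩ := ih
      refine ⟨(S ×ˢ T).image fun p => p.1 + (R * (1 / 2) ^ j) • p.2, ?_, ?_⟩
      · refine Finset.card_image_le.trans ?_
        rw [Finset.card_product, pow_succ]
        gcongr
      · intro x hx
        have := hc hx
        simp only [Set.mem_iUnion, Metric.mem_closedBall, dist_eq_norm] at this
        obtain ⟨s, hs, hxs⟩ := this
        set r := R * (1 / 2 : ℝ) ^ j with hr
        have hr0 : 0 < r := by positivity
        have h1 : r⁻¹ • (x - s) ∈ Metric.closedBall (0 : F) 1 := by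
          rw [mem_closedBall_zero_iff, norm_smul, norm_inv, Real.norm_of_nonneg hr0.le]
          rw [inv_mul_le_iff₀ hr0]; simpa using hxs
        have h2 := hT h1
        simp only [Set.mem_iUnion, Metric.mem_ball, dist_eq_norm] at h2
        obtain ⟨t, ht, h3⟩ := h2
        simp only [Set.mem_iUnion, Metric.mem_closedBall, dist_eq_norm]
        refine ⟨s + r • t, Finset.mem_image.2 ⟨(s, t), Finset.mk_mem_product hs ht, rfl⟩, ?_⟩
        have : x - (s + r • t) = r • (r⁻¹ • (x - s) - t) := by
          rw [smul_sub, smul_smul, mul_inv_cancel₀ hr0.ne', one_smul]; abel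
        rw [this, norm_smul, Real.norm_of_nonneg hr0.le, pow_succ, ← mul_assoc, ← hr]
        gcongr
  obtain ⟨B, hB⟩ := exists_nat_gt R
  have hB0 : B ≠ 0 := by rintro rfl; simp at hB; linarith
  refine ⟨(2 * B) ^ T.card, T.card, fun n hn => ?_⟩
  set j := Nat.log 2 (B * n) + 1 with hj
  obtain ⟨S, hS, hc⟩ := key j
  refine ⟨S, ?_, hc.trans ?_⟩
  · have h1 : 2 ^ Nat.log 2 (B * n) ≤ B * n := Nat.pow_log_le_self 2 (by positivity)
    calc S.card ≤ T.card ^ j := hS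
      _ ≤ (2 ^ T.card) ^ j := by gcongr; exact Nat.lt_two_pow_self.le
      _ = (2 * 2 ^ Nat.log 2 (B * n)) ^ T.card := by
          rw [← pow_mul, mul_comm, pow_mul, hj, pow_succ, mul_comm]
      _ ≤ (2 * (B * n)) ^ T.card := by gcongr
      _ = _ := by rw [← mul_assoc, mul_pow]
  · refine Set.iUnion₂_mono fun s _ => Metric.closedBall_subset_closedBall ?_
    have h1 : B * n < 2 ^ j := Nat.lt_pow_succ_log_self (by norm_num) _
    have h2 : (B : ℝ) * n < 2 ^ j := by exact_mod_cast h1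
    have hn' : (0 : ℝ) < n := by exact_mod_cast hn
    rw [one_div, inv_pow, ← div_eq_mul_inv, div_le_div_iff₀ (by positivity) hn']
    nlinarith

lemma aux_gauss_lintegral (m : ℝ) (v : NNReal) (t : ℝ) :
    ∫⁻ y, ENNReal.ofReal (Real.exp (t * (y - m))) ∂(ProbabilityTheory.gaussianReal m v)
      = ENNReal.ofReal (Real.exp (v * t ^ 2 / 2)) := by
  have h0 : ∀ y, Real.exp (t * (y - m)) = Real.exp (-(t * m)) * Real.exp (t * y) := by
    intro y; rw [← Real.exp_add]; congr 1; ring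
  simp only [h0]
  rw [← ofReal_integral_eq_lintegral_ofReal]
  · rw [integral_const_mul]
    have := ProbabilityTheory.mgf_gaussianReal (p := ProbabilityTheory.gaussianReal m v)
      (X := id) (μ := m) (v := v) (by simp) t
    simp only [ProbabilityTheory.mgf, id] at this
    rw [this, ← Real.exp_add]; congr 2; ring
  · exact (ProbabilityTheory.integrable_exp_mul_gaussianReal t).const_mul _
  · exact ae_of_all _ fun y => by positivity

lemma aux_exp_div_le (n : ℕ) (hn : 1 ≤ n) (a : ℝ) :
    Real.exp (a / n) ≤ 1 + (1 / n) * Real.exp a := by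
  have hn' : (1 : ℝ) ≤ n := by exact_mod_cast hn
  have h := convexOn_exp.2 (Set.mem_univ a) (Set.mem_univ (0 : ℝ))
    (show (0 : ℝ) ≤ 1 / n by positivity) (show 0 ≤ 1 - 1 / (n : ℝ) by
      rw [sub_nonneg, div_le_one (by positivity)]; exact hn') (by ring)
  simp only [smul_eq_mul, mul_zero, add_zero, Real.exp_zero, mul_one] at h
  have h2 : (0 : ℝ) ≤ 1 / n := by positivity
  rw [show a / n = 1 / n * a by ring]
  linarith

/-- inner Gaussian bound -/
lemma aux_inner (m : ℝ) (v : NNReal) (hv : 0 < v) (lam H : ℝ) (hlam : lam = 1 / (8 * v))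
    (h : ℝ) (hh : |h| ≤ H) (n : ℕ) (hn : 1 ≤ n) :
    ∫⁻ y, ENNReal.ofReal (Real.exp (lam * (2 * (y - m) * h + 2 * (1 / n) * |y - m|
        + (1 / n) ^ 2 - h ^ 2 / 2))) ∂(ProbabilityTheory.gaussianReal m v)
      ≤ ENNReal.ofReal (Real.exp ((lam + 2 * Real.exp (v * (2 * lam * H + 2 * lam) ^ 2 / 2)) / n)
          * Real.exp (-(lam * h ^ 2 / 4))) := by
  have hv' : (0 : ℝ) < v := by exact_mod_cast hv
  have hl : 0 < lam := by rw [hlam]; positivity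
  have hn' : (1 : ℝ) ≤ n := by exact_mod_cast hn
  have hn0 : (0 : ℝ) < n := by linarith
  set C1 := 2 * Real.exp (v * (2 * lam * H + 2 * lam) ^ 2 / 2) with hC1
  have hpt : ∀ y : ℝ, Real.exp (lam * (2 * (y - m) * h + 2 * (1 / n) * |y - m|
        + (1 / n) ^ 2 - h ^ 2 / 2)) ≤
      Real.exp (lam * ((1 / n) ^ 2 - h ^ 2 / 2)) * (Real.exp ((2 * lam * h) * (y - m)) +
        (1 / n) * (Real.exp ((2 * lam * h + 2 * lam) * (y - m)) +
          Real.exp ((2 * lam * h - 2 * lam) * (y - m)))) := by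
    intro y
    set e := y - m
    have h1 := aux_exp_div_le n hn (2 * lam * |e|)
    have h2 : Real.exp (2 * lam * |e|) ≤ Real.exp (2 * lam * e) + Real.exp (-(2 * lam * e)) := by
      rcases abs_cases e with ⟨h, -⟩ | ⟨h, -⟩ <;> rw [h]
      · have := Real.exp_pos (-(2 * lam * e)); linarith
      · have := Real.exp_pos (2 * lam * e); rw [mul_neg]; linarith
    have e1 : lam * (2 * e * h + 2 * (1 / n) * |e| + (1 / n) ^ 2 - h ^ 2 / 2)
      = lam * ((1 / n) ^ 2 - h ^ 2 / 2) + (2 * lam * h * e + 2 * lam * |e| / n) := by ring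
    rw [e1, Real.exp_add, Real.exp_add]
    gcongr
    have e2 : (2 * lam * h + 2 * lam) * e = 2 * lam * h * e + 2 * lam * e := by ring
    have e3 : (2 * lam * h - 2 * lam) * e = 2 * lam * h * e + -(2 * lam * e) := by ring
    rw [e2, e3, Real.exp_add (2 * lam * h * e), Real.exp_add (2 * lam * h * e)]
    have : Real.exp (2 * lam * |e| / n) ≤
      1 + 1 / n * (Real.exp (2 * lam * e) + Real.exp (-(2 * lam * e))) := by
      refine h1.trans ?_
      gcongr
    calc _ ≤ Real.exp (2 * lam * h * e) * (1 + 1 / n * (Real.exp (2 * lam * e) + Real.exp (-(2 * lam * e)))) := by gcongr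
      _ = _ := by ring
  refine (lintegral_mono fun y => ENNReal.ofReal_le_ofReal (hpt y)).trans ?_
  have hsplit : ∀ y : ℝ, ENNReal.ofReal (Real.exp (lam * ((1 / n) ^ 2 - h ^ 2 / 2)) * (Real.exp ((2 * lam * h) * (y - m)) +
        (1 / n) * (Real.exp ((2 * lam * h + 2 * lam) * (y - m)) +
          Real.exp ((2 * lam * h - 2 * lam) * (y - m))))) =
      ENNReal.ofReal (Real.exp (lam * ((1 / n) ^ 2 - h ^ 2 / 2))) *
       (ENNReal.ofReal (Real.exp ((2 * lam * h) * (y - m))) + ENNReal.ofReal (1 / n) *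
        (ENNReal.ofReal (Real.exp ((2 * lam * h + 2 * lam) * (y - m))) +
          ENNReal.ofReal (Real.exp ((2 * lam * h - 2 * lam) * (y - m))))) := by
    intro y
    rw [ENNReal.ofReal_mul (by positivity), ENNReal.ofReal_add (by positivity) (by positivity),
      ENNReal.ofReal_mul (by positivity), ENNReal.ofReal_add (by positivity) (by positivity)]
  simp only [hsplit]
  rw [lintegral_const_mul' _ _ ENNReal.ofReal_ne_top, lintegral_add_left (by fun_prop),
    lintegral_const_mul' _ _ ENNReal.ofReal_ne_top, lintegral_add_left (by fun_prop),
    aux_gauss_lintegral, aux_gauss_lintegral, aux_gauss_lintegral]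
  rw [← ENNReal.ofReal_add (by positivity) (by positivity), ← ENNReal.ofReal_mul (by positivity),
    ← ENNReal.ofReal_add (by positivity) (by positivity), ← ENNReal.ofReal_mul (by positivity)]
  refine ENNReal.ofReal_le_ofReal ?_
  have hh' := abs_le.1 hh
  have b1 : Real.exp (v * (2 * lam * h + 2 * lam) ^ 2 / 2) ≤
      Real.exp (v * (2 * lam * H + 2 * lam) ^ 2 / 2) := by
    apply Real.exp_le_exp.2
    have : (2 * lam * h + 2 * lam) ^ 2 ≤ (2 * lam * H + 2 * lam) ^ 2 := by
      apply sq_le_sq'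
      · nlinarith
      · nlinarith
    gcongr
  have b2 : Real.exp (v * (2 * lam * h - 2 * lam) ^ 2 / 2) ≤
      Real.exp (v * (2 * lam * H + 2 * lam) ^ 2 / 2) := by
    apply Real.exp_le_exp.2
    have : (2 * lam * h - 2 * lam) ^ 2 ≤ (2 * lam * H + 2 * lam) ^ 2 := by
      apply sq_le_sq'
      · nlinarith
      · nlinarith
    gcongr
  have b3 : (v : ℝ) * (2 * lam * h) ^ 2 / 2 = lam * h ^ 2 / 4 := by
    rw [hlam]; field_simp; ring
  rw [b3]
  have b4 : 1 ≤ Real.exp (lam * h ^ 2 / 4) := Real.one_le_exp (by positivity)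
  have b5 : Real.exp (lam * h ^ 2 / 4) + 1 / n * (Real.exp (v * (2 * lam * h + 2 * lam) ^ 2 / 2)
      + Real.exp (v * (2 * lam * h - 2 * lam) ^ 2 / 2)) ≤
      Real.exp (lam * h ^ 2 / 4) * Real.exp (C1 / n) := by
    have c1 : 1 / n * (Real.exp (v * (2 * lam * h + 2 * lam) ^ 2 / 2)
      + Real.exp (v * (2 * lam * h - 2 * lam) ^ 2 / 2)) ≤ 1 / n * C1 := by
      gcongr; linarith
    have c2 : C1 / n + 1 ≤ Real.exp (C1 / n) := Real.add_one_le_exp _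
    have c3 : 0 ≤ C1 / n := by positivity
    have c4 : 1 / n * C1 = C1 / n := by ring
    nlinarith
  calc _ ≤ Real.exp (lam * ((1 / n) ^ 2 - h ^ 2 / 2)) *
        (Real.exp (lam * h ^ 2 / 4) * Real.exp (C1 / n)) := by gcongr
    _ = Real.exp (lam * (1 / n) ^ 2 + C1 / n) * Real.exp (-(lam * h ^ 2 / 4)) := by
        rw [← Real.exp_add, ← Real.exp_add, ← Real.exp_add]; congr 1; ring
    _ ≤ _ := by
        gcongr
        rw [add_div]
        have : (1 / (n : ℝ)) ^ 2 ≤ 1 / n := by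
          have : 1 / (n : ℝ) ≤ 1 := by rw [div_le_one hn0]; exact hn'
          have h0 : 0 ≤ 1 / (n : ℝ) := by positivity
          nlinarith
        have : lam * (1 / (n : ℝ)) ^ 2 ≤ lam * (1 / n) := by gcongr
        have e : lam * (1 / (n : ℝ)) = lam / n := by ring
        linarith

lemma aux_weight_le {m : ℕ} (a b : Fin m → ℝ) (t : ℝ) (h : ∀ i, |a i - b i| ≤ t)
    (ht : 2 * t ≤ 1) (i : Fin m) :
    Real.exp (a i) / ∑ j, Real.exp (a j) - Real.exp (b i) / ∑ j, Real.exp (b j) ≤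
      4 * t * (Real.exp (b i) / ∑ j, Real.exp (b j)) := by
  have ht0 : 0 ≤ t := (abs_nonneg _).trans (h i)
  have hne : (Finset.univ : Finset (Fin m)).Nonempty := ⟨i, Finset.mem_univ _⟩
  have hA : 0 < ∑ j, Real.exp (a j) := Finset.sum_pos (fun j _ => Real.exp_pos _) hne
  have hB : 0 < ∑ j, Real.exp (b j) := Finset.sum_pos (fun j _ => Real.exp_pos _) hne
  have h1 : Real.exp (a i) ≤ Real.exp t * Real.exp (b i) := by
    rw [← Real.exp_add]; apply Real.exp_le_exp.2; linarith [(abs_le.1 (h i)).2]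
  have h2 : ∑ j, Real.exp (b j) ≤ Real.exp t * ∑ j, Real.exp (a j) := by
    rw [Finset.mul_sum]
    refine Finset.sum_le_sum fun j _ => ?_
    rw [← Real.exp_add]; apply Real.exp_le_exp.2; linarith [(abs_le.1 (h j)).1]
  have h3 : Real.exp (a i) / ∑ j, Real.exp (a j) ≤
      Real.exp (2 * t) * (Real.exp (b i) / ∑ j, Real.exp (b j)) := by
    rw [← mul_div_assoc, div_le_div_iff₀ hA hB]
    calc Real.exp (a i) * ∑ j, Real.exp (b j)
        ≤ (Real.exp t * Real.exp (b i)) * (Real.exp t * ∑ j, Real.exp (a j)) := by gcongr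
      _ = _ := by rw [two_mul, Real.exp_add]; ring
  have h4 : |Real.exp (2 * t) - 1| ≤ 2 * |2 * t| :=
    Real.abs_exp_sub_one_le (by rw [abs_of_nonneg (by positivity)]; exact ht)
  rw [abs_of_nonneg (by positivity : 0 ≤ 2 * t)] at h4
  have h5 := (abs_le.1 h4).2
  have h6 : 0 ≤ Real.exp (b i) / ∑ j, Real.exp (b j) := by positivity
  nlinarith

lemma aux_weight_abs {m : ℕ} (a b : Fin m → ℝ) (t : ℝ) (h : ∀ i, |a i - b i| ≤ t)
    (ht : 2 * t ≤ 1) (i : Fin m) :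
    |Real.exp (a i) / ∑ j, Real.exp (a j) - Real.exp (b i) / ∑ j, Real.exp (b j)| ≤
      4 * t * (Real.exp (a i) / ∑ j, Real.exp (a j)) +
      4 * t * (Real.exp (b i) / ∑ j, Real.exp (b j)) := by
  have ht0 : 0 ≤ t := (abs_nonneg _).trans (h i)
  have h1 := aux_weight_le a b t h ht i
  have h2 := aux_weight_le b a t (fun i => by rw [abs_sub_comm]; exact h i) ht i
  have p1 : 0 ≤ 4 * t * (Real.exp (a i) / ∑ j, Real.exp (a j)) := by positivity
  have p2 : 0 ≤ 4 * t * (Real.exp (b i) / ∑ j, Real.exp (b j)) := by positivity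
  rw [abs_le]; constructor <;> linarith

lemma aux_weight_sum {m : ℕ} (hm : 1 ≤ m) (a : Fin m → ℝ) :
    ∑ i, Real.exp (a i) / ∑ j, Real.exp (a j) = 1 := by
  have hne : (Finset.univ : Finset (Fin m)).Nonempty := ⟨⟨0, hm⟩, Finset.mem_univ _⟩
  have hA : 0 < ∑ j, Real.exp (a j) := Finset.sum_pos (fun j _ => Real.exp_pos _) hne
  rw [← Finset.sum_div, div_self hA.ne']

lemma aux_moe_abs {d q m : ℕ} (hm : 1 ≤ m) (Ex : Euc d → Euc q → ℝ) (M : ℝ)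
    (hM : ∀ x η, |Ex x η| ≤ M) (β : Fin m → ℝ) (ω : Fin m → Euc d) (η : Fin m → Euc q)
    (x : Euc d) : |moe Ex β ω η x| ≤ M := by
  unfold moe
  refine (Finset.abs_sum_le_sum_abs _ _).trans ?_
  calc _ ≤ ∑ i, (Real.exp (⟪ω i, x⟫_ℝ + β i) / ∑ j, Real.exp (⟪ω j, x⟫_ℝ + β j)) * M := by
        refine Finset.sum_le_sum fun i _ => ?_
        rw [abs_mul, abs_of_nonneg (by positivity)]
        gcongr
        exact hM _ _
    _ = M := by
        rw [← Finset.sum_mul, aux_weight_sum hm (fun i => ⟪ω i, x⟫_ℝ + β i), one_mul]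

lemma aux_moe_lip {d q m : ℕ} (hm : 1 ≤ m) (Ex : Euc d → Euc q → ℝ) (M L R δ : ℝ)
    (hM : ∀ x η, |Ex x η| ≤ M) (hL0 : 0 ≤ L)
    (hL : ∀ x η η', |Ex x η - Ex x η'| ≤ L * ‖η - η'‖)
    (β β' : Fin m → ℝ) (ω ω' : Fin m → Euc d) (η η' : Fin m → Euc q)
    (hβ : ∀ i, |β i - β' i| ≤ δ) (hω : ∀ i, ‖ω i - ω' i‖ ≤ δ) (hη : ∀ i, ‖η i - η' i‖ ≤ δ)
    (hδ : 2 * ((R + 1) * δ) ≤ 1)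
    (x : Euc d) (hx : ‖x‖ ≤ R) :
    |moe Ex β ω η x - moe Ex β' ω' η' x| ≤ (8 * M * (R + 1) + L) * δ := by
  have hδ0 : 0 ≤ δ := (abs_nonneg _).trans (hβ ⟨0, hm⟩)
  have hM0 : 0 ≤ M := (abs_nonneg _).trans (hM x (η ⟨0, hm⟩))
  set a : Fin m → ℝ := fun i => ⟪ω i, x⟫_ℝ + β i with ha
  set b : Fin m → ℝ := fun i => ⟪ω' i, x⟫_ℝ + β' i with hb
  have hab : ∀ i, |a i - b i| ≤ (R + 1) * δ := by
    intro i
    have e : a i - b i = ⟪ω i - ω' i, x⟫_ℝ + (β i - β' i) := by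
      simp only [ha, hb, inner_sub_left]; ring
    rw [e]
    refine (abs_add_le _ _).trans ?_
    have h1 : |⟪ω i - ω' i, x⟫_ℝ| ≤ δ * R :=
      (abs_real_inner_le_norm _ _).trans (mul_le_mul (hω i) hx (norm_nonneg _) hδ0)
    linarith [hβ i]
  have hw := aux_weight_abs a b _ hab hδ
  have sa := aux_weight_sum hm a
  have sb := aux_weight_sum hm b
  set wa : Fin m → ℝ := fun i => Real.exp (a i) / ∑ j, Real.exp (a j) with hwa
  set wb : Fin m → ℝ := fun i => Real.exp (b i) / ∑ j, Real.exp (b j) with hwb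
  have hwb0 : ∀ i, 0 ≤ wb i := fun i => by simp only [hwb]; positivity
  have e : moe Ex β ω η x - moe Ex β' ω' η' x =
      ∑ i, ((wa i - wb i) * Ex x (η i) + wb i * (Ex x (η i) - Ex x (η' i))) := by
    unfold moe
    rw [← Finset.sum_sub_distrib]
    refine Finset.sum_congr rfl fun i _ => ?_
    simp only [hwa, hwb, ha, hb]; ring
  rw [e]
  refine (Finset.abs_sum_le_sum_abs _ _).trans ?_
  set t := (R + 1) * δ with ht
  calc _ ≤ ∑ i, ((4 * t * wa i + 4 * t * wb i) * M + wb i * (L * δ)) := by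
        refine Finset.sum_le_sum fun i _ => ?_
        refine (abs_add_le _ _).trans ?_
        rw [abs_mul, abs_mul, abs_of_nonneg (hwb0 i)]
        refine add_le_add (mul_le_mul (hw i) (hM _ _) (abs_nonneg _) ((abs_nonneg _).trans (hw i))) ?_
        refine mul_le_mul_of_nonneg_left ((hL _ _ _).trans ?_) (hwb0 i)
        exact mul_le_mul_of_nonneg_left (hη i) hL0
    _ = (4 * t * ∑ i, wa i + 4 * t * ∑ i, wb i) * M + (∑ i, wb i) * (L * δ) := by
        simp only [Finset.sum_add_distrib, Finset.sum_mul, Finset.mul_sum, add_mul]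
    _ = _ := by
        rw [show ∑ i, wa i = 1 from sa, show ∑ i, wb i = 1 from sb, ht]; ring

lemma aux_cell {d n : ℕ} (hn : 1 ≤ n) (μ : Measure (Euc d)) [IsProbabilityMeasure μ]
    (f h : Euc d → ℝ) (v : NNReal) (hv : 0 < v) (lam H : ℝ) (hlam : lam = 1 / (8 * v))
    (hh : ∀ x, |h x| ≤ H) (hsqi : Integrable (fun x => h x ^ 2) μ)
    (S : Set (Euc d)) (hS : MeasurableSet S) (hSμ : μ Sᶜ = 0)
    (A : Set (Fin n → Euc d × ℝ)) (hA : MeasurableSet A)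
    (hAr : ∀ data ∈ A, (∀ i, (data i).1 ∈ S) → ∃ r : Euc d → ℝ,
      (∀ i, |r (data i).1| ≤ 1 / n) ∧
      ∑ i, ((data i).2 - (f (data i).1 + h (data i).1 + r (data i).1)) ^ 2 ≤
        ∑ i, ((data i).2 - f (data i).1) ^ 2) :
    (Measure.pi fun _ : Fin n => jointLaw μ f v) A ≤
      ENNReal.ofReal (Real.exp (lam + 2 * Real.exp (v * (2 * lam * H + 2 * lam) ^ 2 / 2)
        - n * ((lam / 4) / (1 + lam * H ^ 2 / 4) * ∫ x, h x ^ 2 ∂μ))) := by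
  have hv' : (0 : ℝ) < v := by exact_mod_cast hv
  have hl : 0 < lam := by rw [hlam]; positivity
  have hn' : (1 : ℝ) ≤ n := by exact_mod_cast hn
  have hn0 : (0 : ℝ) < n := by linarith
  have := aux_finite_jointLaw μ f v
  set ρ := jointLaw μ f v with hρ
  set E0 := lam + 2 * Real.exp (v * (2 * lam * H + 2 * lam) ^ 2 / 2) with hE0
  set c := (lam / 4) / (1 + lam * H ^ 2 / 4) with hc
  have hc0 : 0 < c := by positivity
  set G : Euc d × ℝ → ℝ := fun z => lam * (2 * (z.2 - f z.1) * h z.1 +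
    2 * (1 / n) * |z.2 - f z.1| + (1 / n) ^ 2 - h z.1 ^ 2 / 2) with hG
  have hae : ∀ᵐ data ∂(Measure.pi fun _ : Fin n => ρ), ∀ i, (data i).1 ∈ S := by
    rw [ae_all_iff]
    intro i
    exact (Measure.tendsto_eval_ae_ae (μ := fun _ : Fin n => ρ) (i := i)).eventually
      (aux_jointLaw_ae μ f v S hS hSμ)
  have hptw : ∀ data ∈ A, (∀ i, (data i).1 ∈ S) → 0 ≤ ∑ i, G (data i) := by
    intro data hd hs
    obtain ⟨r, hr, hle⟩ := hAr data hd hs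
    have h0 : 0 ≤ ∑ i, lam * (((data i).2 - f (data i).1) ^ 2 -
        ((data i).2 - (f (data i).1 + h (data i).1 + r (data i).1)) ^ 2) := by
      rw [← Finset.mul_sum, Finset.sum_sub_distrib]
      exact mul_nonneg hl.le (by linarith)
    refine h0.trans (Finset.sum_le_sum fun i _ => ?_)
    simp only [hG]
    apply mul_le_mul_of_nonneg_left _ hl.le
    set e := (data i).2 - f (data i).1 with he
    set h1 := h (data i).1
    set r1 := r (data i).1
    have hr1 : |r1| ≤ 1 / n := hr i
    have e1 : (data i).2 - (f (data i).1 + h1 + r1) = e - (h1 + r1) := by rw [he]; ring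
    rw [e1]
    have q1 : e * r1 ≤ 1 / n * |e| := by
      calc e * r1 ≤ |e * r1| := le_abs_self _
        _ = |r1| * |e| := by rw [abs_mul, mul_comm]
        _ ≤ _ := by gcongr
    have q2 : r1 ^ 2 ≤ (1 / n) ^ 2 := by rw [← sq_abs]; gcongr
    nlinarith [sq_nonneg (h1 + 2 * r1)]
  have step1 : (Measure.pi fun _ : Fin n => ρ) A ≤
      ∫⁻ z, ∏ i, ENNReal.ofReal (Real.exp (G (z i))) ∂(Measure.pi fun _ : Fin n => ρ) := by
    rw [← lintegral_indicator_one hA]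
    refine lintegral_mono_ae ?_
    filter_upwards [hae] with z hz
    by_cases hzA : z ∈ A
    · rw [Set.indicator_of_mem hzA, ← ENNReal.ofReal_prod_of_nonneg
        (fun i _ => (Real.exp_pos _).le), ← Real.exp_sum]
      simp only [Pi.one_apply]
      rw [← ENNReal.ofReal_one]
      exact ENNReal.ofReal_le_ofReal (Real.one_le_exp (hptw z hzA hz))
    · rw [Set.indicator_of_notMem hzA]; exact zero_le
  have step2 : ∫⁻ z, ENNReal.ofReal (Real.exp (G z)) ∂ρ ≤
      ENNReal.ofReal (Real.exp (E0 / n) * (1 - c * ∫ x, h x ^ 2 ∂μ)) := by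
    refine (aux_lintegral_jointLaw_le μ f v _).trans ?_
    have hb : ∀ x, ∫⁻ y, ENNReal.ofReal (Real.exp (G (x, y)))
        ∂(ProbabilityTheory.gaussianReal (f x) v) ≤
        ENNReal.ofReal (Real.exp (E0 / n) * (1 - c * h x ^ 2)) := by
      intro x
      refine (aux_inner (f x) v hv lam H hlam (h x) (hh x) n hn).trans ?_
      refine ENNReal.ofReal_le_ofReal ?_
      refine mul_le_mul_of_nonneg_left ?_ (Real.exp_pos _).le
      set u := lam * h x ^ 2 / 4 with hu
      have hu0 : 0 ≤ u := by positivity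
      have huU : u ≤ lam * H ^ 2 / 4 := by
        have : h x ^ 2 ≤ H ^ 2 := by rw [← sq_abs]; gcongr; exact hh x
        rw [hu]; gcongr
      have h1 : Real.exp (-u) ≤ 1 / (1 + u) := by
        rw [Real.exp_neg, ← one_div]
        apply one_div_le_one_div_of_le (by positivity)
        linarith [Real.add_one_le_exp u]
      have h2 : c * h x ^ 2 = u / (1 + lam * H ^ 2 / 4) := by rw [hc, hu]; ring
      rw [h2]
      have h3 : u / (1 + lam * H ^ 2 / 4) ≤ u / (1 + u) := by gcongr
      have h4 : 1 / (1 + u) = 1 - u / (1 + u) := by field_simp; ring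
      linarith
    refine (lintegral_mono hb).trans ?_
    have hi2 : Integrable (fun x => Real.exp (E0 / n) * (1 - c * h x ^ 2)) μ :=
      ((integrable_const _).sub (hsqi.const_mul c)).const_mul _
    rw [← ofReal_integral_eq_lintegral_ofReal hi2]
    · rw [integral_const_mul, integral_sub (integrable_const _) (hsqi.const_mul c),
        integral_const_mul]
      simp
    · refine ae_of_all _ fun x => ?_
      have : c * h x ^ 2 ≤ 1 := by
        have : h x ^ 2 ≤ H ^ 2 := by rw [← sq_abs]; gcongr; exact hh x
        have h5 : c * (1 + lam * H ^ 2 / 4) = lam / 4 := by rw [hc]; field_simp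
        rw [hc, div_mul_eq_mul_div, div_le_one (by positivity)]
        nlinarith
      exact mul_nonneg (Real.exp_pos _).le (by linarith)
  refine step1.trans ((aux_lintegral_pi_prod_le ρ
    (fun z => ENNReal.ofReal (Real.exp (G z))) (fun _ => ENNReal.ofReal_ne_top) n).trans ?_)
  have step3 : ∫⁻ z, ENNReal.ofReal (Real.exp (G z)) ∂ρ ≤
      ENNReal.ofReal (Real.exp (E0 / n - c * ∫ x, h x ^ 2 ∂μ)) := by
    refine step2.trans (ENNReal.ofReal_le_ofReal ?_)
    rw [sub_eq_add_neg (E0 / n), Real.exp_add]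
    gcongr
    linarith [Real.add_one_le_exp (-(c * ∫ x, h x ^ 2 ∂μ))]
  calc _ ≤ (ENNReal.ofReal (Real.exp (E0 / n - c * ∫ x, h x ^ 2 ∂μ))) ^ n := by gcongr
    _ = _ := by
      rw [← ENNReal.ofReal_pow (Real.exp_pos _).le, ← Real.exp_nat_mul]
      congr 2
      field_simp

lemma aux_measurable_cell {d q k : ℕ} (m : Fin k)
    (B : Set (Fin ((m : ℕ) + 1) → ℝ × Euc d × Euc q)) (hB : MeasurableSet B) :
    MeasurableSet {p : ParamSpaceM d q k | ∃ u ∈ B, p = ⟨m, u⟩} := by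
  change @MeasurableSet (Σ m : Fin k, (Fin ((m : ℕ) + 1) → ℝ × Euc d × Euc q))
    Sigma.instMeasurableSpace _
  refine MeasurableSpace.measurableSet_iInf.2 fun m' => ?_
  change MeasurableSet ((fun u : Fin ((m' : ℕ) + 1) → ℝ × Euc d × Euc q =>
    (⟨m', u⟩ : Σ m : Fin k, (Fin ((m : ℕ) + 1) → ℝ × Euc d × Euc q))) ⁻¹' _)
  by_cases h : m' = m
  · subst h
    convert hB using 1
    ext u
    constructor
    · rintro ⟨u', hu', h⟩
      cases h
      exact hu'
    · intro hu; exact ⟨u, hu, rfl⟩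
  · convert MeasurableSet.empty using 1
    ext u
    constructor
    · rintro ⟨u', hu', h'⟩
      exact h (congrArg Sigma.fst h')
    · intro hu; exact hu.elim

lemma aux_restrict {d : ℕ} (μ : Measure (Euc d)) [IsProbabilityMeasure μ] (X : Set (Euc d))
    (h : μ X = 1) : μ.restrict X = μ := by
  rw [← Measure.restrict_toMeasurable (by rw [h]; simp)]
  refine Measure.restrict_eq_self_of_ae_mem ?_
  change μ (toMeasurable μ X)ᶜ = 0
  rw [prob_compl_eq_zero_iff (measurableSet_toMeasurable _ _), measure_toMeasurable, h]

/-- **Proposition 3.1.**  For data `(X_i, Y_i)` i.i.d. with `X_i ∼ μ` and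
`Y_i = f_{G*}(X_i) + ε_i`, `ε_i | X_i ∼ N(0, v)`, any measurable least squares estimator
`Ĝ_n` taking values in `G_k(Θ)` satisfies `‖f_{Ĝ_n} − f_{G*}‖_{L²(μ)} = O_P(√(log n / n))`:
for every `ε > 0` there is `C > 0` such that for all `n ≥ 2` the probability that
`‖f_{Ĝ_n} − f_{G*}‖_{L²(μ)} > C √(log n / n)` is at most `ε`. -/
theorem softmax_moe_least_squares_rate
    (d q k K : ℕ) (hd : 1 ≤ d) (hq : 1 ≤ q)
    (Ex : Euc d → Euc q → ℝ)
    (Θ : Set (ℝ × Euc d × Euc q)) (hΘ : IsCompact Θ)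
    (X : Set (Euc d)) (hX : Bornology.IsBounded X)
    (μ : Measure (Euc d)) [IsProbabilityMeasure μ] (hμX : μ X = 1)
    (hbound : ∃ M : ℝ, ∀ x η, |Ex x η| ≤ M)
    (hlip : ∃ L : ℝ, ∀ x η η', |Ex x η - Ex x η'| ≤ L * ‖η - η'‖)
    (βs : Fin (K + 1) → ℝ) (ωs : Fin (K + 1) → Euc d) (ηs : Fin (K + 1) → Euc q)
    (hΘs : ∀ j, (βs j, ωs j, ηs j) ∈ Θ)
    (hk : K + 1 < k)
    (v : NNReal) (hv : 0 < v) :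
    ∀ ε : ℝ, 0 < ε →
      ∃ C : ℝ, 0 < C ∧ ∀ n : ℕ, 2 ≤ n →
        ∀ Gn : (Fin n → Euc d × ℝ) → ParamSpaceM d q k,
          Measurable Gn →
          (∀ data i, (Gn data).2 i ∈ Θ) →
          -- `Gn` is a least squares estimator over `G_k(Θ)`:
          (∀ data : Fin n → Euc d × ℝ, ∀ (m : ℕ), 1 ≤ m → m ≤ k →
            ∀ (β : Fin m → ℝ) (ω : Fin m → Euc d) (η : Fin m → Euc q),
              (∀ i, (β i, ω i, η i) ∈ Θ) →
              (∑ i : Fin n, ((data i).2 - moeOf Ex (Gn data) (data i).1) ^ 2) ≤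
                ∑ i : Fin n, ((data i).2 - moe Ex β ω η (data i).1) ^ 2) →
          (Measure.pi fun _ : Fin n => jointLaw μ (moe Ex βs ωs ηs) v)
              {data | C * Real.sqrt (Real.log n / n) <
                Real.sqrt (∫ x in X,
                  (moeOf Ex (Gn data) x - moe Ex βs ωs ηs x) ^ 2 ∂μ)} ≤
            ENNReal.ofReal ε := by
  intro ε hε
  obtain ⟨M, hM⟩ := hbound
  obtain ⟨L', hL'⟩ := hlip
  set L := max L' 0 with hLdef
  have hL0 : 0 ≤ L := le_max_right _ _
  have hL : ∀ x η η', |Ex x η - Ex x η'| ≤ L * ‖η - η'‖ := fun x η η' =>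
    (hL' x η η').trans (mul_le_mul_of_nonneg_right (le_max_left _ _) (norm_nonneg _))
  have hM0 : 0 ≤ M := (abs_nonneg _).trans (hM 0 0)
  obtain ⟨R', hR'⟩ := hX.subset_closedBall (0 : Euc d)
  set R := max R' 0 with hRdef
  have hR0 : 0 ≤ R := le_max_right _ _
  have hXR : X ⊆ Metric.closedBall 0 R :=
    hR'.trans (Metric.closedBall_subset_closedBall (le_max_left _ _))
  have hSμ : μ (Metric.closedBall (0 : Euc d) R)ᶜ = 0 := by
    rw [prob_compl_eq_zero_iff Metric.isClosed_closedBall.measurableSet]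
    exact le_antisymm prob_le_one (hμX ▸ measure_mono hXR)
  obtain ⟨T', hT'⟩ := hΘ.isBounded.subset_closedBall (0 : ℝ × Euc d × Euc q)
  set T := max T' 1 with hTdef
  have hT0 : 0 < T := lt_of_lt_of_le one_pos (le_max_right _ _)
  have hΘT : ∀ p ∈ Θ, ‖p‖ ≤ T := fun p hp => by
    have := hT' hp
    rw [mem_closedBall_zero_iff] at this
    exact this.trans (le_max_left _ _)
  have hcov := fun m : Fin k =>
    aux_cover (F := Fin ((m : ℕ) + 1) → ℝ × Euc d × Euc q) T hT0
  choose Ac ac hcov using hcov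
  obtain ⟨J, hJ⟩ := exists_nat_ge (2 * (8 * M * (R + 1) + L) + 4 * (R + 1))
  have hD0 : 0 ≤ 8 * M * (R + 1) + L := by positivity
  have hJ0 : (0 : ℝ) < J := by nlinarith
  have hJ1 : 1 ≤ J := by exact_mod_cast hJ0
  have hv' : (0 : ℝ) < v := by exact_mod_cast hv
  obtain ⟨lam, hlam⟩ : ∃ lam : ℝ, lam = 1 / (8 * v) := ⟨_, rfl⟩
  have hl : 0 < lam := by rw [hlam]; positivity
  obtain ⟨H, hH⟩ : ∃ H : ℝ, H = 2 * M := ⟨_, rfl⟩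
  set E0 := lam + 2 * Real.exp (v * (2 * lam * H + 2 * lam) ^ 2 / 2) with hE0
  set c := (lam / 4) / (1 + lam * H ^ 2 / 4) with hc
  have hc0 : 0 < c := by positivity
  set a := ∑ m, ac m with ha
  set Q := ∑ m, Ac m * J ^ ac m with hQ
  set w := Q * Real.exp E0 / (ε * Real.log 2) + 1 with hw
  have hlog2 : 0 < Real.log 2 := Real.log_pos (by norm_num)
  have hw0 : 0 < w := by positivity
  have haw : 0 < (a + w) / c := by positivity
  refine ⟨Real.sqrt ((a + w) / c), Real.sqrt_pos.2 haw, ?_⟩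
  intro n hn Gn hGm hGΘ hLS
  have hn1 : 1 ≤ n := by omega
  have hn' : (2 : ℝ) ≤ n := by exact_mod_cast hn
  have hn0 : (0 : ℝ) < n := by linarith
  have hlogn : Real.log 2 ≤ Real.log n := Real.log_le_log (by norm_num) hn'
  rw [aux_restrict μ X hμX]
  set f := moe Ex βs ωs ηs with hf
  set P := (Measure.pi fun _ : Fin n => jointLaw μ f v) with hP
  set bad := {data | Real.sqrt ((a + w) / c) * Real.sqrt (Real.log n / n) <
    Real.sqrt (∫ x, (moeOf Ex (Gn data) x - f x) ^ 2 ∂μ)} with hbad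
  have hNJ : 1 ≤ n * J := Nat.mul_pos hn1 hJ1
  choose S hScard hScov using fun m => hcov m (n * J) hNJ
  set cell : (m : Fin k) → (Fin ((m : ℕ) + 1) → ℝ × Euc d × Euc q) →
      Set (Fin n → Euc d × ℝ) := fun m s =>
    Gn ⁻¹' {p | ∃ u ∈ Metric.closedBall s (1 / ((n * J : ℕ) : ℝ)), p = ⟨m, u⟩} with hcell
  have hcover : bad ⊆ ⋃ m ∈ (Finset.univ : Finset (Fin k)), ⋃ s ∈ S m, bad ∩ cell m s := by
    intro data hdata
    have hmem : (Gn data).2 ∈ Metric.closedBall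
        (0 : Fin (((Gn data).1 : ℕ) + 1) → ℝ × Euc d × Euc q) T := by
      rw [mem_closedBall_zero_iff, pi_norm_le_iff_of_nonneg hT0.le]
      exact fun i => hΘT _ (hGΘ data i)
    have := hScov _ hmem
    simp only [Set.mem_iUnion] at this
    obtain ⟨s, hs, hu⟩ := this
    simp only [Set.mem_iUnion]
    exact ⟨(Gn data).1, Finset.mem_univ _, s, hs, hdata, (Gn data).2, hu, rfl⟩
  have hone : ∀ m s, P (bad ∩ cell m s) ≤
      ENNReal.ofReal (Real.exp (E0 - (a + w) * Real.log n)) := by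
    intro m s
    by_cases hne : (bad ∩ cell m s) = ∅
    · rw [hne]; simp
    obtain ⟨data0, hd0, hc0'⟩ := Set.nonempty_iff_ne_empty.2 hne
    obtain ⟨u0, hu0, hGu0⟩ := hc0'
    set h : Euc d → ℝ := fun x => moeOf Ex (Gn data0) x - f x with hh
    have hI : (a + w) / c * (Real.log n / n) < ∫ x, h x ^ 2 ∂μ := by
      have h1 : Real.sqrt ((a + w) / c) * Real.sqrt (Real.log n / n) <
        Real.sqrt (∫ x, h x ^ 2 ∂μ) := hd0
      rw [← Real.sqrt_mul haw.le] at h1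
      exact (Real.sqrt_lt_sqrt_iff (by positivity)).1 h1
    have hIpos : 0 < ∫ x, h x ^ 2 ∂μ := lt_of_le_of_lt (by positivity) hI
    have hsqi : Integrable (fun x => h x ^ 2) μ := by
      by_contra hni
      rw [integral_undef hni] at hIpos
      exact lt_irrefl _ hIpos
    have hhb : ∀ x, |h x| ≤ H := by
      intro x
      have h1 : |moeOf Ex (Gn data0) x| ≤ M := aux_moe_abs (by omega) Ex M hM _ _ _ x
      have h2 : |f x| ≤ M := aux_moe_abs (by omega) Ex M hM _ _ _ x
      rw [abs_le] at *
      constructor <;> simp only [hh] <;> linarith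
    have hcm : MeasurableSet (cell m s) :=
      hGm (aux_measurable_cell m _ Metric.isClosed_closedBall.measurableSet)
    refine (measure_mono Set.inter_subset_right).trans ?_
    refine (aux_cell hn1 μ f h v hv lam H hlam hhb hsqi _
      Metric.isClosed_closedBall.measurableSet hSμ (cell m s) hcm ?_).trans ?_
    · intro data hdata hdS
      obtain ⟨u, hu, hGu⟩ := hdata
      refine ⟨fun x => moeOf Ex (Gn data) x - moeOf Ex (Gn data0) x, ?_, ?_⟩
      · intro i
        have hx : ‖(data i).1‖ ≤ R := by simpa using hdS i
        have hdist : ‖u - u0‖ ≤ 2 / (n * J) := by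
          rw [← dist_eq_norm]
          refine (dist_triangle_right u u0 s).trans ?_
          rw [Metric.mem_closedBall] at hu hu0
          push_cast at hu hu0
          have e : (2 : ℝ) / (n * J) = 1 / (n * J) + 1 / (n * J) := by ring
          rw [e]; exact add_le_add hu hu0
        have hcoord : ∀ j, ‖u j - u0 j‖ ≤ 2 / (n * J) := fun j =>
          (norm_le_pi_norm (u - u0) j).trans hdist
        simp only [hGu, hGu0]
        have hlip := aux_moe_lip (m := (m : ℕ) + 1) (by omega) Ex M L R (2 / (n * J)) hM hL0 hL
          (fun j => (u j).1) (fun j => (u0 j).1) (fun j => (u j).2.1) (fun j => (u0 j).2.1)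
          (fun j => (u j).2.2) (fun j => (u0 j).2.2)
          (fun j => (norm_fst_le (u j - u0 j)).trans (hcoord j))
          (fun j => ((norm_fst_le (u j - u0 j).2).trans (norm_snd_le _)).trans (hcoord j))
          (fun j => ((norm_snd_le (u j - u0 j).2).trans (norm_snd_le _)).trans (hcoord j))
          ?_ (data i).1 hx
        · refine hlip.trans ?_
          rw [← mul_div_assoc, div_le_div_iff₀ (by positivity) hn0]
          nlinarith
        · rw [← mul_div_assoc, ← mul_div_assoc, div_le_one (by positivity)]
          nlinarith
      · have := hLS data (K + 1) (by omega) (by omega) βs ωs ηs hΘs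
        convert this using 3 with i
        simp only [hh]; ring
    · refine ENNReal.ofReal_le_ofReal (Real.exp_le_exp.2 ?_)
      have e : (a + w) * Real.log n = n * (c * ((a + w) / c * (Real.log n / n))) := by
        field_simp
      rw [e]
      have : n * (c * ((a + w) / c * (Real.log n / n))) ≤ n * (c * ∫ x, h x ^ 2 ∂μ) := by
        gcongr
      linarith
  set b := Real.exp (E0 - (a + w) * Real.log n) with hb
  have hcardR : (∑ m, (S m).card) ≤ Q * n ^ a := by
    rw [hQ, Finset.sum_mul]
    refine Finset.sum_le_sum fun m _ => (hScard m).trans ?_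
    rw [mul_pow, mul_comm (n ^ ac m), ← mul_assoc]
    gcongr
    exact Finset.single_le_sum (f := ac) (fun _ _ => Nat.zero_le _) (Finset.mem_univ m)
  calc P bad ≤ P (⋃ m ∈ (Finset.univ : Finset (Fin k)), ⋃ s ∈ S m, bad ∩ cell m s) :=
        measure_mono hcover
    _ ≤ ∑ m, P (⋃ s ∈ S m, bad ∩ cell m s) := measure_biUnion_finset_le _ _
    _ ≤ ∑ m, ∑ s ∈ S m, P (bad ∩ cell m s) :=
        Finset.sum_le_sum fun m _ => measure_biUnion_finset_le _ _
    _ ≤ ∑ m, ∑ s ∈ S m, ENNReal.ofReal b :=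
        Finset.sum_le_sum fun m _ => Finset.sum_le_sum fun s _ => hone m s
    _ = ((∑ m, (S m).card : ℕ) : ENNReal) * ENNReal.ofReal b := by
        simp [Finset.sum_mul]
    _ ≤ ((Q * n ^ a : ℕ) : ENNReal) * ENNReal.ofReal b := by
        gcongr
    _ = ENNReal.ofReal ((Q * n ^ a : ℕ) * b) := by
        rw [ENNReal.ofReal_mul (by positivity), ENNReal.ofReal_natCast]
    _ ≤ ENNReal.ofReal ε := by
        refine ENNReal.ofReal_le_ofReal ?_
        have hna : (n : ℝ) ^ a = Real.exp (a * Real.log n) := by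
          rw [Real.exp_nat_mul, Real.exp_log hn0]
        push_cast
        have e1 : (n : ℝ) ^ a * b = Real.exp E0 * Real.exp (-(w * Real.log n)) := by
          rw [hna, hb, ← Real.exp_add, ← Real.exp_add]; congr 1; ring
        rw [mul_assoc, e1]
        have e2 : Real.exp (-(w * Real.log n)) ≤ 1 / (w * Real.log 2) := by
          rw [Real.exp_neg, ← one_div]
          apply one_div_le_one_div_of_le (by positivity)
          have : w * Real.log 2 ≤ w * Real.log n := by gcongr
          linarith [Real.add_one_le_exp (w * Real.log n)]
        calc (Q : ℝ) * (Real.exp E0 * Real.exp (-(w * Real.log n)))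
            ≤ Q * (Real.exp E0 * (1 / (w * Real.log 2))) := by gcongr
          _ = Q * Real.exp E0 / (w * Real.log 2) := by ring
          _ ≤ ε := by
            rw [div_le_iff₀ (by positivity), hw]
            have : ε * ((Q * Real.exp E0 / (ε * Real.log 2) + 1) * Real.log 2)
              = Q * Real.exp E0 + ε * Real.log 2 := by field_simp
            rw [this]
            have : 0 < ε * Real.log 2 := by positivity
            linarith

end
end
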